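/- Let n > 4, let α be real with 0 < α < 1/2, let 1 ≤ i < j ≤ n, and set k = min(j−i, n−(j−i)). Then K_{C_n}(α)_{i,j} = (α^k·d_{n−k−1}(α) + α^{n−k}·d_{k−1}(α)) / (d_{n−1}(α) − 2α^n − 2α²·d_{n−2}(α)). -/

import Mathlib

/-- `dpoly n α = ∑_{m=0}^{⌊n/2⌋} (-1)^m C(n-m, m) α^(2m)`. -/
noncomputable def dpoly (n : ℕ) (α : ℝ) : ℝ :=
  ∑ m ∈ Finset.range (n / 2 + 1), (-1 : ℝ) ^ m * (Nat.choose (n - m) m : ℝ) * α ^ (2 * m)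

/-- Adjacency matrix of the cycle graph on `n` vertices. -/
def cycleAdj (n : ℕ) : Matrix (Fin n) (Fin n) ℝ :=
  fun i j => if (i.val + 1) % n = j.val ∨ (j.val + 1) % n = i.val then 1 else 0

lemma dpoly_ext (n N : ℕ) (α : ℝ) (h : n / 2 + 1 ≤ N) :
    dpoly n α = ∑ m ∈ Finset.range N,
      (-1 : ℝ) ^ m * (Nat.choose (n - m) m : ℝ) * α ^ (2 * m) := by
  unfold dpoly
  apply Finset.sum_subset
  · intro x hx
    simp only [Finset.mem_range] at *
    omega
  · intro x _ hx
    simp only [Finset.mem_range] at hx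
    rw [Nat.choose_eq_zero_of_lt (by omega)]
    simp

lemma dpoly_rec (n : ℕ) (α : ℝ) :
    dpoly (n + 2) α = dpoly (n + 1) α - α ^ 2 * dpoly n α := by
  rw [dpoly_ext (n + 2) (n + 1 + 1) α (by omega), dpoly_ext (n + 1) (n + 1 + 1) α (by omega),
    dpoly_ext n (n + 1) α (by omega), Finset.sum_range_succ', Finset.sum_range_succ' _ (n + 1),
    Finset.mul_sum, add_sub_right_comm, ← Finset.sum_sub_distrib]
  congr 1
  · apply Finset.sum_congr rfl
    intro m hm
    simp only [Finset.mem_range] at hm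
    have h1 : n + 2 - (m + 1) = (n - m) + 1 := by omega
    have h2 : n + 1 - (m + 1) = n - m := by omega
    rw [h1, h2, Nat.choose_succ_succ]
    push_cast
    ring

/-- shifted sequence -/
noncomputable def eseq (α : ℝ) : ℕ → ℝ
  | 0 => 0
  | (n + 1) => dpoly n α

lemma eseq_one (α : ℝ) : eseq α 1 = 1 := by simp [eseq, dpoly]

lemma eseq_rec (n : ℕ) (α : ℝ) : eseq α (n + 2) = eseq α (n + 1) - α ^ 2 * eseq α n := by
  cases n with
  | zero => simp [eseq, dpoly]
  | succ n => exact dpoly_rec n α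

lemma eseq_bd (α : ℝ) (h0 : 0 < α) (h1 : α < 1 / 2) (n : ℕ) :
    0 < eseq α (n + 1) ∧ α ^ n ≤ eseq α (n + 1) - α * eseq α n := by
  induction n with
  | zero => simp [eseq_one]; simp [eseq]
  | succ n ih =>
    obtain ⟨hp, hq⟩ := ih
    have hpow : 0 < α ^ n := pow_pos h0 n
    have key : α ^ (n + 1) ≤ eseq α (n + 1 + 1) - α * eseq α (n + 1) := by
      rw [eseq_rec, pow_succ]
      nlinarith [mul_le_mul_of_nonneg_left hq h0.le,
        mul_pos (show 0 < 1 - 2 * α by linarith) hp]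
    refine ⟨?_, key⟩
    have : 0 < α ^ (n + 1) := pow_pos h0 _
    nlinarith [mul_pos h0 hp]

/-- unnormalised Green function -/
noncomputable def fgr (n : ℕ) (α : ℝ) (t : ℕ) : ℝ :=
  α ^ t * eseq α (n - t) + α ^ (n - t) * eseq α t

lemma fgr_symm (n : ℕ) (α : ℝ) (t : ℕ) (ht : t ≤ n) : fgr n α (n - t) = fgr n α t := by
  unfold fgr
  rw [Nat.sub_sub_self ht]
  ring

lemma fgr_rec (n : ℕ) (α : ℝ) (t : ℕ) (ht : t + 2 ≤ n) :
    fgr n α (t + 1) = α * (fgr n α t + fgr n α (t + 2)) := by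
  obtain ⟨s, rfl⟩ := Nat.exists_eq_add_of_le ht
  unfold fgr
  have h1 : t + 2 + s - (t + 1) = s + 1 := by omega
  have h2 : t + 2 + s - t = s + 2 := by omega
  have h3 : t + 2 + s - (t + 2) = s := by omega
  rw [h1, h2, h3, eseq_rec s, eseq_rec t]
  ring

lemma fgr_zero (n : ℕ) (hn : 2 ≤ n) (α : ℝ) :
    fgr n α 0 - 2 * α * fgr n α 1 =
      dpoly (n - 1) α - 2 * α ^ n - 2 * α ^ 2 * dpoly (n - 2) α := by
  obtain ⟨s, rfl⟩ := Nat.exists_eq_add_of_le' hn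
  unfold fgr
  have h1 : s + 2 - 1 = s + 1 := by omega
  simp only [h1, eseq_one, Nat.sub_zero, Nat.add_sub_cancel]
  simp only [eseq]
  ring

lemma delta_pos (n : ℕ) (hn : 2 ≤ n) (α : ℝ) (h0 : 0 < α) (h1 : α < 1 / 2) :
    0 < dpoly (n - 1) α - 2 * α ^ n - 2 * α ^ 2 * dpoly (n - 2) α := by
  obtain ⟨s, rfl⟩ := Nat.exists_eq_add_of_le' hn
  have h1' : s + 2 - 1 = s + 1 := by omega
  rw [h1', Nat.add_sub_cancel]
  obtain ⟨hp, hq⟩ := eseq_bd α h0 h1 (s + 1)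
  simp only [eseq] at hp hq
  rw [pow_succ α (s + 1)]
  nlinarith [mul_le_mul_of_nonneg_left hq h0.le,
        mul_pos (show 0 < 1 - 2 * α by linarith) hp]

/-- distance -/
def dst (a b : ℕ) : ℕ := (a - b) + (b - a)

lemma green_eq (n : ℕ) (hn : 4 < n) (α : ℝ) (a b : ℕ) (ha : a < n) (hb : b < n) :
    fgr n α (dst a b) - α * (fgr n α (dst ((a + 1) % n) b) + fgr n α (dst ((a + (n - 1)) % n) b))
      = if a = b then dpoly (n - 1) α - 2 * α ^ n - 2 * α ^ 2 * dpoly (n - 2) α else 0 := by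
  have hs : ∀ u v, u ≤ n → u + v = n → fgr n α u = fgr n α v := by
    intro u v hu huv
    rw [← fgr_symm n α u hu]
    congr 1
    omega
  -- cyclic distances
  have hsucc : (a + 1) % n = if a + 1 = n then 0 else a + 1 := by
    split_ifs with h
    · rw [h, Nat.mod_self]
    · exact Nat.mod_eq_of_lt (by omega)
  have hpred : (a + (n - 1)) % n = if a = 0 then n - 1 else a - 1 := by
    split_ifs with h
    · subst h; rw [Nat.zero_add]; exact Nat.mod_eq_of_lt (by omega)
    · have : a + (n - 1) = (a - 1) + n := by omega
      rw [this, Nat.add_mod_right]; exact Nat.mod_eq_of_lt (by omega)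
  rw [hsucc, hpred]
  split_ifs with h1 h2 h3 h3 h2 h3 h3
  all_goals try omega
  all_goals unfold dst
  · rw [← fgr_zero n (by omega), hs (0 - b + (b - 0)) 1 (by omega) (by omega)]
    have e1 : a - b + (b - a) = 0 := by omega
    have e2 : a - 1 - b + (b - (a - 1)) = 1 := by omega
    rw [e1, e2]; ring
  · obtain ⟨t, ht⟩ : ∃ t, a - b = t + 1 := ⟨a - b - 1, by omega⟩
    have e1 : a - b + (b - a) = t + 1 := by omega
    have e2 : a - 1 - b + (b - (a - 1)) = t := by omega
    rw [hs (0 - b + (b - 0)) (t + 2) (by omega) (by omega), e1, e2,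
      fgr_rec n α t (by omega)]
    ring
  · rw [← fgr_zero n (by omega), hs (n - 1 - b + (b - (n - 1))) 1 (by omega) (by omega)]
    have e1 : a - b + (b - a) = 0 := by omega
    have e2 : a + 1 - b + (b - (a + 1)) = 1 := by omega
    rw [e1, e2]; ring
  · obtain ⟨t, ht⟩ : ∃ t, b - a = t + 1 := ⟨b - a - 1, by omega⟩
    have e1 : a - b + (b - a) = t + 1 := by omega
    have e2 : a + 1 - b + (b - (a + 1)) = t := by omega
    rw [hs (n - 1 - b + (b - (n - 1))) (t + 2) (by omega) (by omega), e1, e2,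
      fgr_rec n α t (by omega)]
    ring
  · rw [← fgr_zero n (by omega)]
    have e1 : a - b + (b - a) = 0 := by omega
    have e2 : a + 1 - b + (b - (a + 1)) = 1 := by omega
    have e3 : a - 1 - b + (b - (a - 1)) = 1 := by omega
    rw [e1, e2, e3]; ring
  · rcases Nat.lt_or_gt_of_ne h3 with h | h
    · obtain ⟨t, ht⟩ : ∃ t, b - a = t + 1 := ⟨b - a - 1, by omega⟩
      have e1 : a - b + (b - a) = t + 1 := by omega
      have e2 : a + 1 - b + (b - (a + 1)) = t := by omega
      have e3 : a - 1 - b + (b - (a - 1)) = t + 2 := by omega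
      rw [e1, e2, e3, fgr_rec n α t (by omega)]; ring
    · obtain ⟨t, ht⟩ : ∃ t, a - b = t + 1 := ⟨a - b - 1, by omega⟩
      have e1 : a - b + (b - a) = t + 1 := by omega
      have e2 : a + 1 - b + (b - (a + 1)) = t + 2 := by omega
      have e3 : a - 1 - b + (b - (a - 1)) = t := by omega
      rw [e1, e2, e3, fgr_rec n α t (by omega)]; ring

lemma adj_sum (n : ℕ) (hn : 4 < n) (a : Fin n) (g : ℕ → ℝ) :
    ∑ l : Fin n, cycleAdj n a l * g l.val = g ((a.val + 1) % n) + g ((a.val + (n - 1)) % n) := by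
  have hp : 0 < n := by omega
  have key : ∀ l : Fin n, cycleAdj n a l * g l.val =
      (if l = ⟨(a.val + 1) % n, Nat.mod_lt _ hp⟩ then g l.val else 0) +
      (if l = ⟨(a.val + (n - 1)) % n, Nat.mod_lt _ hp⟩ then g l.val else 0) := by
    intro l
    obtain ⟨a, ha⟩ := a
    obtain ⟨l, hl⟩ := l
    have hsucc : ∀ a, a < n → (a + 1) % n = if a + 1 = n then 0 else a + 1 := by
      intro a ha
      split_ifs with h
      · rw [h, Nat.mod_self]
      · exact Nat.mod_eq_of_lt (by omega)
    have hpred : (a + (n - 1)) % n = if a = 0 then n - 1 else a - 1 := by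
      split_ifs with h
      · subst h; rw [Nat.zero_add]; exact Nat.mod_eq_of_lt (by omega)
      · have : a + (n - 1) = (a - 1) + n := by omega
        rw [this, Nat.add_mod_right]; exact Nat.mod_eq_of_lt (by omega)
    simp only [cycleAdj, Fin.mk.injEq]
    rw [hsucc a ha, hsucc l hl, hpred]
    by_cases c1 : l = (if a + 1 = n then 0 else a + 1)
    · have c2 : ¬ l = (if a = 0 then n - 1 else a - 1) := by
        split_ifs at c1 ⊢ <;> omega
      rw [if_pos (Or.inl c1.symm), if_pos c1, if_neg c2]; ring
    · by_cases c2 : l = (if a = 0 then n - 1 else a - 1)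
      · have c3 : (if l + 1 = n then 0 else l + 1) = a := by
          split_ifs at c2 ⊢ <;> omega
        rw [if_pos (Or.inr c3), if_neg c1, if_pos c2]; ring
      · have c3 : ¬ (if l + 1 = n then 0 else l + 1) = a := by
          split_ifs at c2 ⊢ <;> omega
        rw [if_neg (by rintro (h | h); exacts [c1 h.symm, c3 h]), if_neg c1, if_neg c2]; ring
  rw [Finset.sum_congr rfl (fun l _ => key l), Finset.sum_add_distrib]
  simp

theorem stmt3 (n : ℕ) (hn : 4 < n) (α : ℝ) (hα0 : 0 < α) (hα1 : α < 1 / 2)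
    (i j : ℕ) (hi : 1 ≤ i) (hij : i < j) (hj : j ≤ n)
    (k : ℕ) (hk : k = min (j - i) (n - (j - i))) :
    (((1 : Matrix (Fin n) (Fin n) ℝ) - α • cycleAdj n)⁻¹ - 1)
        ⟨i - 1, by omega⟩ ⟨j - 1, by omega⟩
      = (α ^ k * dpoly (n - k - 1) α + α ^ (n - k) * dpoly (k - 1) α)
          / (dpoly (n - 1) α - 2 * α ^ n - 2 * α ^ 2 * dpoly (n - 2) α) := by
  have hD := delta_pos n (by omega) α hα0 hα1
  have hgreen := green_eq n hn α
  set D := dpoly (n - 1) α - 2 * α ^ n - 2 * α ^ 2 * dpoly (n - 2) α with hDdef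
  have hinv : ((1 : Matrix (Fin n) (Fin n) ℝ) - α • cycleAdj n)⁻¹ =
      Matrix.of (fun a b : Fin n => fgr n α (dst a.val b.val) / D) := by
    apply Matrix.inv_eq_right_inv
    ext a b
    rw [Matrix.sub_mul, Matrix.one_mul, Matrix.smul_mul, Matrix.sub_apply, Matrix.smul_apply,
      Matrix.mul_apply]
    simp only [Matrix.of_apply, smul_eq_mul]
    rw [adj_sum n hn a (fun l => fgr n α (dst l b.val) / D)]
    have h := hgreen a.val b.val a.isLt b.isLt
    rw [Matrix.one_apply]
    have h2 : (if a = b then (1 : ℝ) else 0) = (if a.val = b.val then D else 0) / D := by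
      simp only [Fin.ext_iff]
      split_ifs
      · rw [div_self hD.ne']
      · simp
    rw [h2, ← h]
    ring
  rw [hinv, Matrix.sub_apply, Matrix.one_apply_ne (by simp only [ne_eq, Fin.mk.injEq]; omega),
    sub_zero, Matrix.of_apply]
  congr 1
  have e : dst (i - 1) (j - 1) = j - i := by unfold dst; omega
  have hf : fgr n α (j - i) = fgr n α k := by
    rcases Nat.le_total (j - i) (n - (j - i)) with h | h
    · rw [hk, min_eq_left h]
    · rw [hk, min_eq_right h, fgr_symm n α _ (by omega)]
  simp only [e]
  rw [hf]
  unfold fgr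
  obtain ⟨p, hp⟩ : ∃ p, k = p + 1 := ⟨k - 1, by omega⟩
  obtain ⟨q, hq⟩ : ∃ q, n - k = q + 1 := ⟨n - k - 1, by omega⟩
  rw [hq, hp]
  rfl
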